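/- Let L be a linear order and let n,k ≥ 1. Define f : L^{nk} → L by f(x_{11},…,x_{1k},…,x_{n1},…,x_{nk}) := max_{1≤i≤n} min_{1≤j≤k} x_{ij}. Then (a) f is k-block symmetric and k-absorptive; and (b) f is strictly monotone in the sense that if x_{ij} < y_{ij} for all i,j then f(x) < f(y); consequently f is a k-absorptive polymorphism of arity nk of the directed graph (L, <), and in particular of every transitive tournament T_m = ({1,…,m}, <). -/

import Mathlib

/-!
The minimum of a block depends only on its set of entries and can only grow when that set shrinks.
Hence `max_i min_j x i j ≤ max_i min_j y i j` as soon as every block of `x` contains, as a set of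
entries, some block of `y`. Block symmetry and absorption both follow from two opposite inequalities
of this kind. Strict monotonicity holds because maxima and minima of finite nonempty families in a
linear order are attained.
-/

structure RelStruct (σ : Type) (ar : σ → ℕ) (B : Type) where
  rel : ∀ s : σ, Set (Fin (ar s) → B)

/-- `h` is a homomorphism from the structure `SA` to the structure `SB`. -/
def IsHom {σ : Type} {ar : σ → ℕ} {A B : Type}
    (SA : RelStruct σ ar A) (SB : RelStruct σ ar B) (h : A → B) : Prop :=
  ∀ (s : σ) (t : Fin (ar s) → A), t ∈ SA.rel s → (fun i => h (t i)) ∈ SB.rel s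

/-- `f` is a polymorphism of `S` whose arguments are indexed by the type `I`
(for `I = Fin n × Fin k` this is a polymorphism of arity `n * k`). -/
def IsPolyIdx {σ : Type} {ar : σ → ℕ} {B : Type} (S : RelStruct σ ar B)
    {I : Type} (f : (I → B) → B) : Prop :=
  ∀ (s : σ) (t : I → Fin (ar s) → B),
    (∀ i, t i ∈ S.rel s) → (fun j => f fun i => t i j) ∈ S.rel s

/-- a ternary operation written in curried form is a polymorphism of `S`. -/
def IsPoly3 {σ : Type} {ar : σ → ℕ} {B : Type} (S : RelStruct σ ar B)
    (m : B → B → B → B) : Prop :=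
  ∀ (s : σ) (t₁ t₂ t₃ : Fin (ar s) → B), t₁ ∈ S.rel s → t₂ ∈ S.rel s → t₃ ∈ S.rel s →
    (fun j => m (t₁ j) (t₂ j) (t₃ j)) ∈ S.rel s

/-- a quasi Maltsev operation: `m x x y = m y x x = m y y y`. -/
def IsQuasiMaltsev {B : Type} (m : B → B → B → B) : Prop :=
  ∀ x y, m x x y = m y x x ∧ m y x x = m y y y

/-- An operation of arity `n * k` (arguments grouped into `n` blocks of length `k`,
presented as a matrix `Fin n → Fin k → B`) is `k`-block symmetric if its value only
depends on the multiset of sets of entries of the blocks. -/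
def BlockSym {B : Type} (n k : ℕ) (f : (Fin n → Fin k → B) → B) : Prop :=
  ∀ x y : Fin n → Fin k → B,
    Multiset.map (fun i => Set.range (x i)) Finset.univ.val =
      Multiset.map (fun i => Set.range (y i)) Finset.univ.val →
    f x = f y

/-- A `k`-block symmetric operation is `k`-absorptive if
`f(S₁,S₂,S₃,…,Sₙ) = f(S₂,S₂,S₃,…,Sₙ)` whenever `S₂ ⊆ S₁` (stated here for an
arbitrary pair of distinct blocks, which by block symmetry is equivalent). -/
def IsAbsorptive {B : Type} (n k : ℕ) (f : (Fin n → Fin k → B) → B) : Prop :=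
  BlockSym n k f ∧
  ∀ (x : Fin n → Fin k → B) (i j : Fin n), i ≠ j →
    Set.range (x j) ⊆ Set.range (x i) → f x = f (Function.update x i (x j))

/-- A block operation (matrix form `Fin n → Fin k → B`) is a polymorphism of arity
`n * k` of `S`, identifying `B^(n·k)` with `Fin n × Fin k → B`. -/
def IsBlockPoly {σ : Type} {ar : σ → ℕ} {B : Type} (S : RelStruct σ ar B)
    (n k : ℕ) (f : (Fin n → Fin k → B) → B) : Prop :=
  IsPolyIdx S (fun v : Fin n × Fin k → B => f fun i j => v (i, j))

/-- The directed graph `(L, <)`, viewed as a relational structure with one binary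
relation. For `L = Fin m` this is the transitive tournament `T_m`. -/
def ltDigraph (L : Type) [LT L] : RelStruct Unit (fun _ => 2) L :=
  ⟨fun _ => {t | t 0 < t 1}⟩

/-- `f(x₁₁,…,x_{nk}) = max_i min_j x_{ij}` on a linear order, in block matrix form. -/
def supInf (L : Type) [LinearOrder L] (n k : ℕ) (hn : 0 < n) (hk : 0 < k)
    (x : Fin n → Fin k → L) : L :=
  Finset.univ.sup' ⟨⟨0, hn⟩, Finset.mem_univ _⟩ fun i =>
    Finset.univ.inf' ⟨⟨0, hk⟩, Finset.mem_univ _⟩ (x i)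

section FiniteFamilies

variable {ι κ α : Type*} {s : Finset ι} {t : Finset κ}

theorem inf'_le_inf'_of_image_subset [SemilatticeInf α] (hs : s.Nonempty) (ht : t.Nonempty)
    {u : ι → α} {v : κ → α} (h : v '' t ⊆ u '' s) : s.inf' hs u ≤ t.inf' ht v := by
  refine Finset.le_inf' _ _ fun b hb => ?_
  obtain ⟨a, ha, hab⟩ := h (Set.mem_image_of_mem v hb)
  exact Finset.inf'_le_of_le u ha hab.le

theorem sup'_lt_sup' [LinearOrder α] (hs : s.Nonempty) {u v : ι → α} (h : ∀ a ∈ s, u a < v a) :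
    s.sup' hs u < s.sup' hs v :=
  (Finset.sup'_lt_iff _).2 fun a ha => (Finset.lt_sup'_iff _).2 ⟨a, ha, h a ha⟩

theorem inf'_lt_inf' [LinearOrder α] (hs : s.Nonempty) {u v : ι → α} (h : ∀ a ∈ s, u a < v a) :
    s.inf' hs u < s.inf' hs v :=
  (Finset.lt_inf'_iff _).2 fun a ha => (Finset.inf'_lt_iff _).2 ⟨a, ha, h a ha⟩

end FiniteFamilies

theorem range_eq_range_of_map_univ_eq {ι ι' β : Type*} [Fintype ι] [Fintype ι']
    {u : ι → β} {v : ι' → β}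
    (h : Finset.univ.val.map u = Finset.univ.val.map v) : Set.range u = Set.range v := by
  ext b
  have hb : b ∈ Finset.univ.val.map u ↔ b ∈ Finset.univ.val.map v := by rw [h]
  simpa only [Multiset.mem_map, Finset.mem_val, Finset.mem_univ, true_and, Set.mem_range]
    using hb

theorem isBlockPoly_ltDigraph_iff {L : Type} [LT L] {n k : ℕ} {f : (Fin n → Fin k → L) → L} :
    IsBlockPoly (ltDigraph L) n k f ↔
      ∀ x y : Fin n → Fin k → L, (∀ i j, x i j < y i j) → f x < f y :=
  ⟨fun hf x y hxy => hf () (fun p => ![x p.1 p.2, y p.1 p.2]) fun p => hxy p.1 p.2,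
    fun hf _ _ ht => hf _ _ fun i j => ht (i, j)⟩

section SupInf

variable {L : Type} [LinearOrder L] {n k : ℕ} (hn : 0 < n) (hk : 0 < k)

theorem supInf_le_supInf {n' k' : ℕ} (hn' : 0 < n') (hk' : 0 < k')
    {x : Fin n → Fin k → L} {y : Fin n' → Fin k' → L}
    (h : ∀ i, ∃ i', Set.range (y i') ⊆ Set.range (x i)) :
    supInf L n k hn hk x ≤ supInf L n' k' hn' hk' y := by
  refine Finset.sup'_le _ _ fun i _ => ?_
  obtain ⟨i', hi'⟩ := h i
  refine Finset.le_sup'_of_le _ (Finset.mem_univ i') (inf'_le_inf'_of_image_subset _ _ ?_)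
  simpa only [Finset.coe_univ, Set.image_univ] using hi'

theorem supInf_lt_supInf {x y : Fin n → Fin k → L} (h : ∀ i j, x i j < y i j) :
    supInf L n k hn hk x < supInf L n k hn hk y :=
  sup'_lt_sup' _ fun i _ => inf'_lt_inf' _ fun j _ => h i j

theorem blockSym_supInf : BlockSym n k (supInf L n k hn hk) := by
  intro x y hxy
  have hrange := range_eq_range_of_map_univ_eq hxy
  refine le_antisymm (supInf_le_supInf hn hk hn hk fun i => ?_)
    (supInf_le_supInf hn hk hn hk fun i => ?_)
  · exact (hrange.subset ⟨i, rfl⟩).imp fun _ => Eq.subset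
  · exact (hrange.superset ⟨i, rfl⟩).imp fun _ => Eq.subset

theorem supInf_update_of_range_subset {x : Fin n → Fin k → L} {i j : Fin n}
    (h : Set.range (x j) ⊆ Set.range (x i)) :
    supInf L n k hn hk (Function.update x i (x j)) = supInf L n k hn hk x := by
  refine le_antisymm (supInf_le_supInf hn hk hn hk fun l => ?_)
    (supInf_le_supInf hn hk hn hk fun l => ⟨l, ?_⟩)
  · obtain rfl | hl := eq_or_ne l i
    · exact ⟨j, by rw [Function.update_self]⟩
    · exact ⟨l, by rw [Function.update_of_ne hl]⟩
  · obtain rfl | hl := eq_or_ne l i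
    · rwa [Function.update_self]
    · rw [Function.update_of_ne hl]

theorem isAbsorptive_supInf : IsAbsorptive n k (supInf L n k hn hk) :=
  ⟨blockSym_supInf hn hk, fun _ _ _ _ h => (supInf_update_of_range_subset hn hk h).symm⟩

theorem isBlockPoly_supInf : IsBlockPoly (ltDigraph L) n k (supInf L n k hn hk) :=
  isBlockPoly_ltDigraph_iff.2 fun _ _ => supInf_lt_supInf hn hk

end SupInf

/-- Theorem: on a linear order `L`, the operation `max_i min_j x_{ij}` is
(a) `k`-block symmetric and `k`-absorptive, (b) strictly monotone, and consequently a
`k`-absorptive polymorphism of arity `n * k` of the digraph `(L, <)`, in particular of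
every transitive tournament `T_m = (Fin m, <)`. -/
theorem supInf_absorptive_polymorphism (L : Type) [LinearOrder L]
    (n k : ℕ) (hn : 0 < n) (hk : 0 < k) :
    IsAbsorptive n k (supInf L n k hn hk) ∧
    (∀ x y : Fin n → Fin k → L, (∀ i j, x i j < y i j) →
      supInf L n k hn hk x < supInf L n k hn hk y) ∧
    IsBlockPoly (ltDigraph L) n k (supInf L n k hn hk) ∧
    ∀ m : ℕ, 0 < m →
      IsBlockPoly (ltDigraph (Fin m)) n k (supInf (Fin m) n k hn hk) :=
  ⟨isAbsorptive_supInf hn hk, fun _ _ => supInf_lt_supInf hn hk, isBlockPoly_supInf hn hk,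
    fun _ _ => isBlockPoly_supInf hn hk⟩
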